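/- Let μ, ν ∈ 𝒫_1(ℝ) and let θ : ℝ → ℝ be convex. Then inf_{π ∈ Π(μ,ν)} ∫ θ(b(π_x) − x) μ(dx) = inf_{η ≤_c ν} inf_{π ∈ Π(μ,η)} ∫ θ(y − x) π(dx,dy), where the outer infimum on the right runs over all η ∈ 𝒫_1(ℝ) dominated by ν in convex order. -/

import Mathlib

open MeasureTheory Set Filter
open scoped ENNReal NNReal Topology RealInnerProductSpace

noncomputable section

namespace WOT

/-- The set of couplings of `μ` and `ν`. -/
def Couplings {X Y : Type*} [MeasurableSpace X] [MeasurableSpace Y]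
    (μ : Measure X) (ν : Measure Y) : Set (Measure (X × Y)) :=
  {π | π.map Prod.fst = μ ∧ π.map Prod.snd = ν}

/-- `K` is a disintegration of `π` with respect to its first marginal `μ`. -/
def IsDisint {X Y : Type*} [MeasurableSpace X] [MeasurableSpace Y]
    (π : Measure (X × Y)) (μ : Measure X) (K : X → Measure Y) : Prop :=
  Measurable K ∧ (∀ x, IsProbabilityMeasure (K x)) ∧
    ∀ s : Set (X × Y), MeasurableSet s → π s = ∫⁻ x, K x (Prod.mk x ⁻¹' s) ∂μ

/-- The intensity `I(Q)` of a measure on measures. -/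
def intensity {Y : Type*} [MeasurableSpace Y] (Q : Measure (Measure Y)) : Measure Y :=
  Q.join

/-- The intensity map `Î`. -/
def intensityHat {X Y : Type*} [MeasurableSpace X] [MeasurableSpace Y]
    (P : Measure (X × Measure Y)) : Measure (X × Y) :=
  P.bind fun xp => (Measure.dirac xp.1).prod xp.2

/-- `Λ(μ,ν)`, the set of probability measures on `X × 𝒫(Y)` whose intensity is a coupling. -/
def Lambda {X Y : Type*} [MeasurableSpace X] [MeasurableSpace Y]
    (μ : Measure X) (ν : Measure Y) : Set (Measure (X × Measure Y)) :=
  {P | IsProbabilityMeasure P ∧ (∀ᵐ xp ∂P, IsProbabilityMeasure xp.2) ∧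
    intensityHat P ∈ Couplings μ ν}

/-- Finite `r`-th moment. -/
def FinMom {X : Type*} [MeasurableSpace X] [PseudoMetricSpace X]
    (r : ℝ) (x₀ : X) (μ : Measure X) : Prop :=
  ∫⁻ x, ENNReal.ofReal (dist x x₀ ^ r) ∂μ < ⊤

/-- The growth class `Φ_r`. -/
def PhiR {X : Type*} [PseudoMetricSpace X] (r : ℝ) (x₀ : X) : Set (X → ℝ) :=
  {φ | Continuous φ ∧ ∃ K : ℝ, ∀ x, |φ x| ≤ K * (1 + dist x x₀ ^ r)}

/-- The `r`-Wasserstein distance (valued in `ℝ≥0∞`). -/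
def Wr {Y : Type*} [MeasurableSpace Y] [PseudoMetricSpace Y]
    (r : ℝ) (p q : Measure Y) : ℝ≥0∞ :=
  ⨅ π ∈ Couplings p q, (∫⁻ z : Y × Y, ENNReal.ofReal (dist z.1 z.2 ^ r) ∂π) ^ (1 / r)

/-- `𝒫_r(Y)`: probability measures with finite `r`-th moment. -/
def Pr {Y : Type*} [MeasurableSpace Y] [PseudoMetricSpace Y] (r : ℝ) (y₀ : Y) :
    Set (Measure Y) :=
  {p | IsProbabilityMeasure p ∧ FinMom r y₀ p}

/-- `𝒫_r(𝒫_r(Y))`: probability measures on `𝒫_r(Y)` with finite `r`-th moment w.r.t. `𝒲_r`. -/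
def PrP {Y : Type*} [MeasurableSpace Y] [PseudoMetricSpace Y] (r : ℝ) (y₀ : Y) :
    Set (Measure (Measure Y)) :=
  {Q | IsProbabilityMeasure Q ∧ (∀ᵐ p ∂Q, p ∈ Pr r y₀) ∧
    ∫⁻ p, Wr r p (Measure.dirac y₀) ^ r ∂Q < ⊤}

/-- The positive part of an extended real, valued in `ℝ≥0∞`. -/
def epos (e : EReal) : ℝ≥0∞ := if e = ⊤ then ⊤ else ENNReal.ofReal e.toReal

/-- Extended-real integral: positive part minus negative part (with value `⊥` when
both parts are infinite, i.e. when the integral is not well-defined). -/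
def eInt {X : Type*} [MeasurableSpace X] (f : X → EReal) (μ : Measure X) : EReal :=
  ((∫⁻ x, epos (f x) ∂μ : ℝ≥0∞) : EReal) - ((∫⁻ x, epos (-(f x)) ∂μ : ℝ≥0∞) : EReal)

/-- Extended-real integral with the opposite (`⊤`) convention for ill-defined integrals. -/
def eIntU {X : Type*} [MeasurableSpace X] (f : X → EReal) (μ : Measure X) : EReal :=
  -eInt (fun x => -(f x)) μ

/-- The extended-real integral is well-defined. -/
def eIntWellDef {X : Type*} [MeasurableSpace X] (f : X → EReal) (μ : Measure X) : Prop :=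
  (∫⁻ x, epos (f x) ∂μ ≠ ⊤) ∨ (∫⁻ x, epos (-(f x)) ∂μ ≠ ⊤)

/-- Convergence in the `r`-Wasserstein distance. -/
def WrTendsto {Y : Type*} [MeasurableSpace Y] [PseudoMetricSpace Y]
    (r : ℝ) (ps : ℕ → Measure Y) (p : Measure Y) : Prop :=
  Tendsto (fun n => Wr r (ps n) p) atTop (nhds 0)

/-- (Sequential) lower semicontinuity on `𝒫_r(Y)` w.r.t. `𝒲_r`. -/
def LscWr1 {Y : Type*} [MeasurableSpace Y] [PseudoMetricSpace Y]
    (r : ℝ) (y₀ : Y) (G : Measure Y → EReal) : Prop :=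
  ∀ (p : Measure Y) (ps : ℕ → Measure Y), p ∈ Pr r y₀ → (∀ n, ps n ∈ Pr r y₀) →
    WrTendsto r ps p → G p ≤ liminf (fun n => G (ps n)) atTop

/-- (Sequential) upper semicontinuity on `𝒫_r(Y)` w.r.t. `𝒲_r`. -/
def UscWr1 {Y : Type*} [MeasurableSpace Y] [PseudoMetricSpace Y]
    (r : ℝ) (y₀ : Y) (G : Measure Y → EReal) : Prop :=
  ∀ (p : Measure Y) (ps : ℕ → Measure Y), p ∈ Pr r y₀ → (∀ n, ps n ∈ Pr r y₀) →
    WrTendsto r ps p → limsup (fun n => G (ps n)) atTop ≤ G p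

/-- (Sequential) lower semicontinuity on `X × 𝒫_r(Y)` w.r.t. `d_X × 𝒲_r`. -/
def LscWr {X Y : Type*} [TopologicalSpace X] [MeasurableSpace Y] [PseudoMetricSpace Y]
    (r : ℝ) (y₀ : Y) (C : X × Measure Y → EReal) : Prop :=
  ∀ (x : X) (xs : ℕ → X) (p : Measure Y) (ps : ℕ → Measure Y),
    p ∈ Pr r y₀ → (∀ n, ps n ∈ Pr r y₀) → Tendsto xs atTop (nhds x) → WrTendsto r ps p →
    C (x, p) ≤ liminf (fun n => C (xs n, ps n)) atTop

/-- (Sequential) continuity of a real-valued cost on `X × 𝒫_r(Y)` w.r.t. `d_X × 𝒲_r`. -/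
def ContWr {X Y : Type*} [TopologicalSpace X] [MeasurableSpace Y] [PseudoMetricSpace Y]
    (r : ℝ) (y₀ : Y) (C : X × Measure Y → ℝ) : Prop :=
  ∀ (x : X) (xs : ℕ → X) (p : Measure Y) (ps : ℕ → Measure Y),
    p ∈ Pr r y₀ → (∀ n, ps n ∈ Pr r y₀) → Tendsto xs atTop (nhds x) → WrTendsto r ps p →
    Tendsto (fun n => C (xs n, ps n)) atTop (nhds (C (x, p)))

/-- Convexity of an extended-real-valued function on a set of measures. -/
def EConvexOn {Y : Type*} [MeasurableSpace Y] (S : Set (Measure Y)) (G : Measure Y → EReal) :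
    Prop :=
  ∀ p ∈ S, ∀ q ∈ S, ∀ t : ℝ≥0, t ≤ 1 →
    G ((t : ℝ≥0∞) • p + ((1 - t : ℝ≥0) : ℝ≥0∞) • q)
      ≤ ((t : ℝ) : EReal) * G p + (((1 - t : ℝ≥0) : ℝ) : EReal) * G q

/-- The lower semicontinuous convex envelope (on `𝒫_r(Y)` w.r.t. `𝒲_r`). -/
def cvxEnvWr {Y : Type*} [MeasurableSpace Y] [PseudoMetricSpace Y]
    (r : ℝ) (y₀ : Y) (f : Measure Y → EReal) : Measure Y → EReal :=
  fun p => ⨆ G ∈ {G : Measure Y → EReal |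
    LscWr1 r y₀ G ∧ EConvexOn (Pr r y₀) G ∧ ∀ q ∈ Pr r y₀, G q ≤ f q}, G p

/-- The cost `C̃(x,p) = inf {∫ C(x,q) Q(dq) : Q ∈ 𝒫_r(𝒫_r(Y)), I(Q) = p}`. -/
def tildeC {X Y : Type*} [MeasurableSpace X] [MeasurableSpace Y] [PseudoMetricSpace Y]
    (r : ℝ) (y₀ : Y) (C : X × Measure Y → EReal) : X × Measure Y → EReal :=
  fun xp => ⨅ Q ∈ {Q | Q ∈ PrP r y₀ ∧ intensity Q = xp.2}, eInt (fun q => C (xp.1, q)) Q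

/-- The barycenter of a measure on a normed space. -/
def bary {E : Type*} [NormedAddCommGroup E] [NormedSpace ℝ E] [MeasurableSpace E]
    (p : Measure E) : E :=
  ∫ y, y ∂p

/-- Convex order of measures. -/
def ConvexOrder {E : Type*} [NormedAddCommGroup E] [NormedSpace ℝ E] [MeasurableSpace E]
    (ν' ν : Measure E) : Prop :=
  ∀ θ : E → ℝ, ConvexOn ℝ Set.univ θ →
    eInt (fun y => ((θ y : ℝ) : EReal)) ν' ≤ eInt (fun y => ((θ y : ℝ) : EReal)) ν

/-- The inf-convolution `R_C ψ`. -/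
def RC {X Y : Type*} [MeasurableSpace Y] [PseudoMetricSpace Y]
    (r : ℝ) (y₀ : Y) (C : X × Measure Y → EReal) (ψ : Y → ℝ) : X → EReal :=
  fun x => ⨅ p ∈ Pr r y₀, (((-∫ y, ψ y ∂p : ℝ) : EReal) + C (x, p))

/-- `κ` is a regular conditional distribution of `Yv` given the sub-σ-algebra `m1`. -/
def IsRCD {Ω Y : Type*} [MeasurableSpace Y] (m1 : MeasurableSpace Ω)
    (mΩ : MeasurableSpace Ω) (P : @Measure Ω mΩ) (Yv : Ω → Y) (κ : Ω → Measure Y) : Prop :=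
  (∀ ω, IsProbabilityMeasure (κ ω)) ∧ Measurable[m1] κ ∧
    ∀ A : Set Y, MeasurableSet A → ∀ B : Set Ω, MeasurableSet[m1] B →
      P (B ∩ Yv ⁻¹' A) = ∫⁻ ω in B, κ ω A ∂P

end WOT

open WOT

/-!
Pushing `μ` forward under `x ↦ b(π_x)` turns a coupling of `μ` and `ν` into a deterministic
transport of the same cost, whose target is dominated by `ν` in convex order by Jensen. Conversely,
Jensen replaces a coupling of `μ` and `η` by the map `T` sending `x` to the barycenter of its
disintegration. As the law of `T` is dominated by `η`, hence by `ν`, Strassen's theorem provides a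
martingale kernel from it to `ν`, and composing this kernel with `T` gives a coupling of `μ` and `ν`
with barycenters `T`.

Strassen's theorem itself is obtained by duality. Superhedging prices form a sublinear functional
on claims, and convex order is precisely the absence of arbitrage: it makes every superhedging cost
of the zero claim nonnegative. Hahn–Banach and Riesz–Markov–Kakutani then give a measure pricing all
compactly supported claims, and controlling the tails by first moments extends this to claims of
linear growth, among them the two marginals and the gains of self-financing strategies.
-/

namespace WOT

open ProbabilityTheory
open scoped CompactlySupported Pointwise

section ExtendedIntegral

variable {X Y : Type*} [MeasurableSpace X] [MeasurableSpace Y] {μ : Measure X}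

lemma measurable_epos : Measurable epos :=
  Measurable.ite (measurableSet_singleton ⊤) measurable_const
    measurable_ereal_toReal.ennreal_ofReal

lemma epos_coe (a : ℝ) : epos a = ENNReal.ofReal a := by
  simp [epos]

lemma eInt_coe (f : X → ℝ) (μ : Measure X) :
    eInt (fun x => (f x : EReal)) μ
      = ((∫⁻ x, ENNReal.ofReal (f x) ∂μ : ℝ≥0∞) : EReal)
        - ((∫⁻ x, ENNReal.ofReal (-f x) ∂μ : ℝ≥0∞) : EReal) := by
  simp only [eInt, ← EReal.coe_neg, epos_coe]

lemma eInt_congr_ae {f g : X → EReal} (hfg : f =ᵐ[μ] g) : eInt f μ = eInt g μ := by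
  have hpos := hfg.fun_comp epos
  have hneg := hfg.fun_comp fun e => epos (-e)
  unfold eInt
  congr 2
  exacts [lintegral_congr_ae hpos, lintegral_congr_ae hneg]

lemma eInt_map {f : Y → EReal} {T : X → Y} (hf : Measurable f) (hT : Measurable T) :
    eInt f (μ.map T) = eInt (fun x => f (T x)) μ := by
  have hpos : Measurable fun y => epos (f y) := measurable_epos.comp hf
  have hneg : Measurable fun y => epos (-f y) := measurable_epos.comp hf.neg
  simp only [eInt, lintegral_map hpos hT, lintegral_map hneg hT]

lemma eInt_of_integrable {f : X → ℝ} (hf : Integrable f μ) :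
    eInt (fun x => (f x : EReal)) μ = ((∫ x, f x ∂μ : ℝ) : EReal) := by
  have hpos : ∫⁻ x, ENNReal.ofReal (f x) ∂μ ≠ ⊤ := hf.lintegral_lt_top.ne
  have hneg : ∫⁻ x, ENNReal.ofReal (-f x) ∂μ ≠ ⊤ := hf.neg.lintegral_lt_top.ne
  rw [eInt_coe, integral_eq_lintegral_pos_part_sub_lintegral_neg_part hf, EReal.coe_sub,
    EReal.coe_ennreal_toReal hpos, EReal.coe_ennreal_toReal hneg]

lemma eInt_eq_top_of_not_integrable {f g : X → ℝ} (hg : Integrable g μ) (hgf : ∀ x, g x ≤ f x)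
    (hfm : AEStronglyMeasurable f μ) (hf : ¬ Integrable f μ) :
    eInt (fun x => (f x : EReal)) μ = ⊤ := by
  have hneg : ∫⁻ x, ENNReal.ofReal (-g x) ∂μ ≠ ⊤ := hg.neg.lintegral_lt_top.ne
  have hsub : ∫⁻ x, ENNReal.ofReal (f x - g x) ∂μ = ⊤ := by
    by_contra hfin
    have hint : Integrable (f - g) μ :=
      (lintegral_ofReal_ne_top_iff_integrable (hfm.sub hg.aestronglyMeasurable)
        (Eventually.of_forall fun x => sub_nonneg.2 (hgf x))).1 hfin
    exact hf (by simpa using hint.add hg)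
  have hpos : ∫⁻ x, ENNReal.ofReal (f x) ∂μ = ⊤ := by
    by_contra hfin
    refine (ENNReal.add_ne_top.2 ⟨hfin, hneg⟩) (top_le_iff.1 ?_)
    rw [← hsub, ← lintegral_add_left' hfm.aemeasurable.ennreal_ofReal]
    exact lintegral_mono fun x => sub_eq_add_neg (f x) (g x) ▸ ENNReal.ofReal_add_le
  have hneg' : ∫⁻ x, ENNReal.ofReal (-f x) ∂μ ≠ ⊤ :=
    ne_top_of_le_ne_top hneg (lintegral_mono fun x => ENNReal.ofReal_le_ofReal
      (neg_le_neg (hgf x)))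
  rw [eInt_coe, hpos, EReal.coe_ennreal_top, sub_eq_add_neg]
  exact EReal.top_add_of_ne_bot (by simpa using hneg')

end ExtendedIntegral

section Convex

variable {E : Type*} [NormedAddCommGroup E] [NormedSpace ℝ E] {θ : E → ℝ}

lemma continuous_of_convexOn_univ [FiniteDimensional ℝ E] (hθ : ConvexOn ℝ univ θ) :
    Continuous θ :=
  continuousOn_univ.1 (hθ.continuousOn isOpen_univ)

lemma exists_affine_le_of_convexOn_univ (hθ : ConvexOn ℝ univ θ) (hθc : Continuous θ) :
    ∃ (a : StrongDual ℝ E) (c : ℝ), ∀ y, a y + c ≤ θ y := by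
  obtain ⟨a, c, hac, -⟩ := hθ.exists_affine_le_of_lt (𝕜 := ℝ) (mem_univ (0 : E))
    (sub_one_lt (θ 0)) isClosed_univ hθc.continuousOn.lowerSemicontinuousOn
  exact ⟨a, c, fun y => hac ⟨y, mem_univ y⟩⟩

lemma convexOn_univ_ciSup {ι : Type*} [Nonempty ι] {u : ι → E → ℝ}
    (hu : ∀ i, ConvexOn ℝ univ (u i)) (hbdd : ∀ y, BddAbove (range fun i => u i y)) :
    ConvexOn ℝ univ fun y => ⨆ i, u i y := by
  refine ⟨convex_univ, fun y _ z _ a b ha hb hab => ciSup_le fun i => ?_⟩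
  refine ((hu i).2 (mem_univ y) (mem_univ z) ha hb hab).trans ?_
  gcongr
  exacts [le_ciSup (hbdd y) i, le_ciSup (hbdd z) i]

lemma exists_convexOn_between_of_add_nonneg {φ ψ : E → ℝ} {h : E → StrongDual ℝ E}
    (hle : ∀ x y, 0 ≤ φ x + ψ y + h x (y - x)) :
    ∃ g : E → ℝ, ConvexOn ℝ univ g ∧ (∀ x, -φ x ≤ g x) ∧ ∀ y, g y ≤ ψ y := by
  let u : E → E → ℝ := fun x y => -φ x - h x (y - x)
  have huψ : ∀ x y, u x y ≤ ψ y := fun x y => by linarith [hle x y]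
  have hbdd : ∀ y, BddAbove (range fun x => u x y) := fun y =>
    ⟨ψ y, forall_mem_range.2 fun x => huψ x y⟩
  have hu : ∀ x, ConvexOn ℝ univ (u x) := fun x => by
    have haffine : u x = fun y => (-h x).toLinearMap y + (h x x - φ x) := by
      funext y
      simp only [u, map_sub, ContinuousLinearMap.coe_coe, neg_apply]
      ring
    rw [haffine]
    exact ((-h x).toLinearMap.convexOn convex_univ).add_const _
  refine ⟨fun y => ⨆ x, u x y, convexOn_univ_ciSup hu hbdd, fun x => ?_,
    fun y => ciSup_le fun x => huψ x y⟩
  calc -φ x = u x x := by simp [u]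
    _ ≤ ⨆ x', u x' x := le_ciSup (hbdd x) x

end Convex

section FiniteMoment

variable {E : Type*} [NormedAddCommGroup E] [MeasurableSpace E] [BorelSpace E]
  [SecondCountableTopology E] {μ : Measure E}

lemma finMom_one_iff_integrable_id : FinMom 1 (0 : E) μ ↔ Integrable (fun x => x) μ := by
  simp only [FinMom, Real.rpow_one, dist_zero_right, Integrable, HasFiniteIntegral, ofReal_norm]
  exact (and_iff_right aestronglyMeasurable_id).symm

end FiniteMoment

section ConvexOrder

variable {E : Type*} [NormedAddCommGroup E] [NormedSpace ℝ E] [MeasurableSpace E]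
  {μ ν η : Measure E}

lemma ConvexOrder.trans (hμν : ConvexOrder μ ν) (hνη : ConvexOrder ν η) : ConvexOrder μ η :=
  fun θ hθ => (hμν θ hθ).trans (hνη θ hθ)

variable [BorelSpace E] [FiniteDimensional ℝ E]

lemma ConvexOrder.integrable_id (hην : ConvexOrder η ν) (hν : Integrable (fun x => x) ν) :
    Integrable (fun x => x) η := by
  by_contra hη
  have hnorm : ¬ Integrable (fun x => ‖x‖) η :=
    fun h => hη ((integrable_norm_iff aestronglyMeasurable_id).1 h)
  have hle := hην _ convexOn_univ_norm
  rw [eInt_eq_top_of_not_integrable (integrable_zero E ℝ η) norm_nonneg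
    continuous_norm.aestronglyMeasurable hnorm, eInt_of_integrable hν.norm] at hle
  exact (EReal.coe_lt_top _).not_ge hle

variable [IsFiniteMeasure η] {θ : E → ℝ}

lemma ConvexOrder.integrable (hην : ConvexOrder η ν) (hη : Integrable (fun x => x) η)
    (hθ : ConvexOn ℝ univ θ) (hθν : Integrable θ ν) : Integrable θ η := by
  have hθc := continuous_of_convexOn_univ hθ
  obtain ⟨a, c, hac⟩ := exists_affine_le_of_convexOn_univ hθ hθc
  by_contra hθη
  have hle := hην θ hθ
  rw [eInt_eq_top_of_not_integrable ((a.integrable_comp hη).add (integrable_const c)) hac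
    hθc.aestronglyMeasurable hθη, eInt_of_integrable hθν] at hle
  exact (EReal.coe_lt_top _).not_ge hle

lemma ConvexOrder.integral_le (hην : ConvexOrder η ν) (hη : Integrable (fun x => x) η)
    (hθ : ConvexOn ℝ univ θ) (hθν : Integrable θ ν) : ∫ x, θ x ∂η ≤ ∫ x, θ x ∂ν := by
  have hle := hην θ hθ
  rwa [eInt_of_integrable (hην.integrable hη hθ hθν), eInt_of_integrable hθν,
    EReal.coe_le_coe_iff] at hle

end ConvexOrder

lemma integrable_integral_of_integrable_compProd {X Y : Type*} [MeasurableSpace X]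
    [MeasurableSpace Y] {μ : Measure X} {κ : Kernel X Y} [SFinite μ] [IsSFiniteKernel κ]
    {f : X × Y → ℝ} (hf : Integrable f (μ ⊗ₘ κ)) :
    Integrable (fun x => ∫ y, f (x, y) ∂κ x) μ := by
  simpa using Integrable.integral_compProd (κ := Kernel.const Unit μ)
    (η := Kernel.prodMkLeft Unit κ) (a := ()) hf

section Barycenter

variable {X E : Type*} [MeasurableSpace X] [NormedAddCommGroup E] [NormedSpace ℝ E]
  [MeasurableSpace E] {μ : Measure X} {κ : Kernel X E}

lemma integrable_bary (hκ : Integrable (fun y => y) (κ ∘ₘ μ)) :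
    Integrable (fun x => bary (κ x)) μ := by
  rw [Measure.comp_eq_comp_const_apply] at hκ
  simpa only [Kernel.const_apply, bary] using hκ.integral_comp

lemma ae_map_bary_le_integral [FiniteDimensional ℝ E] [SFinite μ] [IsMarkovKernel κ]
    {f : X × E → ℝ} (hf : Integrable f (μ ⊗ₘ κ))
    (hconv : ∀ x, ConvexOn ℝ univ fun y => f (x, y))
    (hκ : Integrable (fun y => y) (κ ∘ₘ μ)) :
    ∀ᵐ x ∂μ, f (x, bary (κ x)) ≤ ∫ y, f (x, y) ∂κ x := by
  filter_upwards [((Measure.integrable_compProd_iff hf.aestronglyMeasurable).1 hf).1,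
    Measure.ae_integrable_of_integrable_comp hκ] with x hfx hidx
  exact (hconv x).map_integral_le (continuous_of_convexOn_univ (hconv x)).continuousOn
    isClosed_univ (by simp) hidx hfx

variable [BorelSpace E]

lemma measurable_bary [SecondCountableTopology E] [IsSFiniteKernel κ] :
    Measurable fun x => bary (κ x) :=
  (StronglyMeasurable.integral_kernel_prod_right' (κ := κ) (f := Prod.snd)
    measurable_snd.stronglyMeasurable).measurable

lemma eInt_bary_le_eInt_compProd [FiniteDimensional ℝ E] [SFinite μ] [IsMarkovKernel κ]
    {f : X × E → ℝ} (hf : Measurable f)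
    (hconv : ∀ x, ConvexOn ℝ univ fun y => f (x, y)) (hκ : Integrable (fun y => y) (κ ∘ₘ μ))
    {α : X → ℝ} (hα : Integrable α μ) (a : StrongDual ℝ E) (hle : ∀ x y, α x + a y ≤ f (x, y)) :
    eInt (fun x => (f (x, bary (κ x)) : EReal)) μ ≤ eInt (fun z => (f z : EReal)) (μ ⊗ₘ κ) := by
  have hfst : Integrable (fun z : X × E => α z.1) (μ ⊗ₘ κ) := by
    rw [← Measure.fst_compProd μ κ] at hα
    exact hα.comp_measurable measurable_fst
  have hsnd : Integrable (fun z : X × E => a z.2) (μ ⊗ₘ κ) :=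
    (Measure.integrable_compProd_snd_iff (by fun_prop)).2 (a.integrable_comp hκ)
  by_cases hfi : Integrable f (μ ⊗ₘ κ)
  swap
  · rw [eInt_eq_top_of_not_integrable (hfst.add hsnd) (fun z => hle z.1 z.2)
      hf.aestronglyMeasurable hfi]
    exact le_top
  have hjensen := ae_map_bary_le_integral hfi hconv hκ
  have hmean := integrable_integral_of_integrable_compProd hfi
  have hbary : Integrable (fun x => f (x, bary (κ x))) μ :=
    integrable_of_le_of_le (hf.comp (measurable_id.prodMk measurable_bary)).aestronglyMeasurable
      (Eventually.of_forall fun x => hle x (bary (κ x))) hjensen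
      (hα.add (a.integrable_comp (integrable_bary hκ))) hmean
  rw [eInt_of_integrable hbary, eInt_of_integrable hfi, Measure.integral_compProd hfi]
  exact EReal.coe_le_coe_iff.2 (integral_mono_ae hbary hmean hjensen)

lemma convexOrder_map_bary [FiniteDimensional ℝ E] [IsFiniteMeasure μ] [IsMarkovKernel κ]
    (hκ : Integrable (fun y => y) (κ ∘ₘ μ)) :
    ConvexOrder (μ.map fun x => bary (κ x)) (κ ∘ₘ μ) := by
  intro θ hθ
  have hθc := continuous_of_convexOn_univ hθ
  have hθm : Measurable fun y => (θ y : EReal) := hθc.measurable.coe_real_ereal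
  obtain ⟨a, c, hac⟩ := exists_affine_le_of_convexOn_univ hθ hθc
  rw [eInt_map hθm measurable_bary, ← Measure.snd_compProd, Measure.snd,
    eInt_map hθm measurable_snd]
  exact eInt_bary_le_eInt_compProd (f := fun z => θ z.2) (hθc.measurable.comp measurable_snd)
    (fun _ => hθ) hκ (integrable_const c) a fun _ y => by rw [add_comm]; exact hac y

end Barycenter

section Truncation

variable {E : Type*} [NormedAddCommGroup E]

lemma exists_seq_cutoff (E : Type*) [NormedAddCommGroup E] [ProperSpace E] :
    ∃ χ : ℕ → C_c(E, ℝ), (∀ n z, χ n z ∈ Icc 0 1) ∧ ∀ (n : ℕ) z, ‖z‖ ≤ n → χ n z = 1 := by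
  have hχ : ∀ n : ℕ, ∃ χ : C_c(E, ℝ), (∀ z, χ z ∈ Icc 0 1) ∧ ∀ z, ‖z‖ ≤ n → χ z = 1 := by
    intro n
    obtain ⟨f, hf1, -, hfs, hf01⟩ := exists_continuous_one_zero_of_isCompact
      (isCompact_closedBall (0 : E) n) isClosed_empty (disjoint_empty _)
    exact ⟨⟨f, hfs⟩, hf01, fun z hz => hf1 (mem_closedBall_zero_iff.2 hz)⟩
  choose χ hχ01 hχ1 using hχ
  exact ⟨χ, hχ01, hχ1⟩

lemma one_add_norm_le_indicator_add_indicator {r : ℝ} {z : E × E}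
    (hz : r < ‖z‖) :
    1 + ‖z‖ ≤ (Metric.closedBall 0 r)ᶜ.indicator (fun x => 1 + ‖x‖) z.1
      + (Metric.closedBall 0 r)ᶜ.indicator (fun x => 1 + ‖x‖) z.2 := by
  have hnonneg : ∀ x : E, 0 ≤ (Metric.closedBall 0 r)ᶜ.indicator (fun x => 1 + ‖x‖) x :=
    indicator_nonneg fun x _ => by positivity
  have heq : ∀ x : E, r < ‖x‖ →
      (Metric.closedBall 0 r)ᶜ.indicator (fun x => 1 + ‖x‖) x = 1 + ‖x‖ := fun x hx =>
    indicator_of_mem (by simpa using hx) _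
  rcases max_choice ‖z.1‖ ‖z.2‖ with hmax | hmax <;> rw [Prod.norm_def, hmax] at hz ⊢
  · linarith [heq z.1 hz, hnonneg z.2]
  · linarith [heq z.2 hz, hnonneg z.1]

variable [MeasurableSpace E] {η : Measure E}

/-- The contribution of `‖x‖ > r` to the first moment of `η`, with `1 + ‖x‖` in place of `‖x‖`. -/
def momentTail (η : Measure E) (r : ℝ) : ℝ :=
  ∫ x, (Metric.closedBall 0 r)ᶜ.indicator (fun x => 1 + ‖x‖) x ∂η

lemma integrable_one_add_norm [IsFiniteMeasure η] (hη : Integrable (fun x => x) η) :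
    Integrable (fun x => 1 + ‖x‖) η :=
  (integrable_const 1).add hη.norm

variable [BorelSpace E] [IsFiniteMeasure η]

lemma integrable_indicator_one_add_norm (hη : Integrable (fun x => x) η) (r : ℝ) :
    Integrable ((Metric.closedBall 0 r)ᶜ.indicator fun x => 1 + ‖x‖) η :=
  (integrable_one_add_norm hη).indicator Metric.isClosed_closedBall.measurableSet.compl

lemma tendsto_momentTail (hη : Integrable (fun x => x) η) :
    Tendsto (fun n : ℕ => momentTail η n) atTop (𝓝 0) := by
  have hi := integrable_one_add_norm hη
  have hball : ∀ n : ℕ, MeasurableSet (Metric.closedBall (0 : E) n) :=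
    fun n => Metric.isClosed_closedBall.measurableSet
  have htail : ∀ n : ℕ, momentTail η n
      = ∫ x, (1 + ‖x‖) ∂η - ∫ x in Metric.closedBall 0 n, (1 + ‖x‖) ∂η := fun n => by
    rw [momentTail, integral_indicator (hball n).compl, ← integral_add_compl (hball n) hi,
      add_sub_cancel_left]
  simpa only [htail, sub_self] using
    ((aecover_closedBall tendsto_natCast_atTop_atTop).integral_tendsto_of_countably_generated
      hi).const_sub (∫ x, (1 + ‖x‖) ∂η)

end Truncation

section Superhedging

variable {E : Type*} [NormedAddCommGroup E] [NormedSpace ℝ E] [MeasurableSpace E]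
  {η ν : Measure E} {F G : E × E → ℝ} {c d : ℝ}

/-- Semistatic superhedging, the dual problem of martingale transport: a claim `F` on two marginals
with laws `η` and `ν` is superhedgeable at cost `c` if it is dominated by static positions `φ`, `ψ`
of total price at most `c` and the gain of a self-financing strategy `h`. -/
def Superhedgeable (η ν : Measure E) (F : E × E → ℝ) (c : ℝ) : Prop :=
  ∃ (φ ψ : E → ℝ) (h : E → StrongDual ℝ E), Integrable φ η ∧ Integrable ψ ν ∧
    (∀ x y, F (x, y) ≤ φ x + ψ y + h x (y - x)) ∧ ∫ x, φ x ∂η + ∫ y, ψ y ∂ν ≤ c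

lemma superhedgeable_fst {φ : E → ℝ} (hφ : Integrable φ η) :
    Superhedgeable η ν (fun z => φ z.1) (∫ x, φ x ∂η) :=
  ⟨φ, 0, 0, hφ, integrable_zero _ _ _, by simp, by simp⟩

lemma superhedgeable_snd {ψ : E → ℝ} (hψ : Integrable ψ ν) :
    Superhedgeable η ν (fun z => ψ z.2) (∫ y, ψ y ∂ν) :=
  ⟨0, ψ, 0, integrable_zero _ _ _, hψ, by simp, by simp⟩

lemma superhedgeable_gain (h : E → StrongDual ℝ E) :
    Superhedgeable η ν (fun z => h z.1 (z.2 - z.1)) 0 :=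
  ⟨0, 0, h, integrable_zero _ _ _, integrable_zero _ _ _, by simp, by simp⟩

lemma Superhedgeable.mono (hF : Superhedgeable η ν F c) (hGF : G ≤ F) (hcd : c ≤ d) :
    Superhedgeable η ν G d := by
  obtain ⟨φ, ψ, h, hφ, hψ, hle, hcost⟩ := hF
  exact ⟨φ, ψ, h, hφ, hψ, fun x y => (hGF (x, y)).trans (hle x y), hcost.trans hcd⟩

lemma Superhedgeable.add (hF : Superhedgeable η ν F c) (hG : Superhedgeable η ν G d) :
    Superhedgeable η ν (F + G) (c + d) := by
  obtain ⟨φ, ψ, h, hφ, hψ, hle, hcost⟩ := hF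
  obtain ⟨φ', ψ', h', hφ', hψ', hle', hcost'⟩ := hG
  refine ⟨φ + φ', ψ + ψ', h + h', hφ.add hφ', hψ.add hψ', fun x y => ?_, ?_⟩
  · simp only [Pi.add_apply, add_apply]
    linarith [hle x y, hle' x y]
  · rw [integral_add' hφ hφ', integral_add' hψ hψ']
    linarith

lemma Superhedgeable.smul (hF : Superhedgeable η ν F c) {t : ℝ} (ht : 0 ≤ t) :
    Superhedgeable η ν (t • F) (t * c) := by
  obtain ⟨φ, ψ, h, hφ, hψ, hle, hcost⟩ := hF
  refine ⟨t • φ, t • ψ, t • h, hφ.smul t, hψ.smul t, fun x y => ?_, ?_⟩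
  · have := mul_le_mul_of_nonneg_left (hle x y) ht
    simpa only [Pi.smul_apply, smul_apply, smul_eq_mul, mul_add] using this
  · simp only [Pi.smul_apply, smul_eq_mul, integral_const_mul]
    rw [← mul_add]
    exact mul_le_mul_of_nonneg_left hcost ht

lemma superhedgeable_of_forall_le [IsProbabilityMeasure η] (hF : ∀ z, F z ≤ c) :
    Superhedgeable η ν F c :=
  (superhedgeable_fst (integrable_const c)).mono hF (by simp)

lemma Superhedgeable.nonneg_of_convexOrder [BorelSpace E] [FiniteDimensional ℝ E]
    [IsFiniteMeasure η] [IsFiniteMeasure ν] (h0 : Superhedgeable η ν 0 c)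
    (hην : ConvexOrder η ν) (hν : Integrable (fun y => y) ν) : 0 ≤ c := by
  obtain ⟨φ, ψ, h, hφ, hψ, hle, hcost⟩ := h0
  obtain ⟨g, hg, hφg, hgψ⟩ := exists_convexOn_between_of_add_nonneg hle
  have hgc := continuous_of_convexOn_univ hg
  obtain ⟨a, b, hab⟩ := exists_affine_le_of_convexOn_univ hg hgc
  have hgν : Integrable g ν := integrable_of_le_of_le hgc.aestronglyMeasurable
    (Eventually.of_forall hab) (Eventually.of_forall hgψ)
    ((a.integrable_comp hν).add (integrable_const b)) hψ
  have hη := hην.integrable_id hν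
  have hchain : -∫ x, φ x ∂η ≤ ∫ y, ψ y ∂ν := calc
    -∫ x, φ x ∂η = ∫ x, -φ x ∂η := (integral_neg φ).symm
    _ ≤ ∫ x, g x ∂η := integral_mono hφ.neg (hην.integrable hη hg hgν) hφg
    _ ≤ ∫ y, g y ∂ν := hην.integral_le hη hg hgν
    _ ≤ ∫ y, ψ y ∂ν := integral_mono hgν hψ hgψ
  linarith

section Price

/-- The superhedging price of a claim. As an infimum of reals it is meaningful only for claims with
a nonempty set of superhedging costs that is bounded below, such as bounded claims in the absence
of arbitrage. -/
def superhedgingPrice (η ν : Measure E) (F : E × E → ℝ) : ℝ :=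
  sInf {c | Superhedgeable η ν F c}

lemma superhedgingPrice_smul (F : E × E → ℝ) {t : ℝ} (ht : 0 < t) :
    superhedgingPrice η ν (t • F) = t * superhedgingPrice η ν F := by
  have hscale : {c | Superhedgeable η ν (t • F) c} = t • {c | Superhedgeable η ν F c} := by
    ext c
    rw [mem_smul_set_iff_inv_smul_mem₀ ht.ne']
    refine ⟨fun hc => ?_, fun hc => ?_⟩
    · simpa [smul_smul, inv_mul_cancel₀ ht.ne'] using hc.smul (inv_nonneg.2 ht.le)
    · simpa [mul_inv_cancel_left₀ ht.ne'] using Superhedgeable.smul hc ht.le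
  rw [superhedgingPrice, hscale, Real.sInf_smul_of_nonneg ht.le, smul_eq_mul, superhedgingPrice]

lemma superhedgingPrice_add_le
    (hF : {c | Superhedgeable η ν F c}.Nonempty) (hF' : BddBelow {c | Superhedgeable η ν F c})
    (hG : {c | Superhedgeable η ν G c}.Nonempty) (hG' : BddBelow {c | Superhedgeable η ν G c})
    (hFG : BddBelow {c | Superhedgeable η ν (F + G) c}) :
    superhedgingPrice η ν (F + G) ≤ superhedgingPrice η ν F + superhedgingPrice η ν G := by
  rw [superhedgingPrice, superhedgingPrice, superhedgingPrice, ← csInf_add hF hF' hG hG']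
  refine csInf_le_csInf hFG (hF.add hG) ?_
  rintro _ ⟨c, hc, d, hd, rfl⟩
  exact Superhedgeable.add hc hd

lemma bddBelow_superhedgeable_of_forall_ge [BorelSpace E] [FiniteDimensional ℝ E]
    [IsProbabilityMeasure η] [IsFiniteMeasure ν] (hην : ConvexOrder η ν)
    (hν : Integrable (fun y => y) ν) {C : ℝ} (hF : ∀ z, C ≤ F z) :
    BddBelow {c | Superhedgeable η ν F c} := by
  have hneg : Superhedgeable η ν (-F) (-C) := superhedgeable_of_forall_le fun z => neg_le_neg (hF z)
  refine ⟨C, fun c hc => ?_⟩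
  have hzero : Superhedgeable η ν 0 (c + -C) := by
    simpa using Superhedgeable.add hc hneg
  linarith [hzero.nonneg_of_convexOrder hην hν]

end Price

section PricingMeasure

/-- Pricing measures, the feasible points of the martingale transport problem dual to superhedging:
under `π`, no compactly supported continuous claim costs more than its superhedging price. -/
def IsPricingMeasure (η ν : Measure E) (π : Measure (E × E)) : Prop :=
  ∀ (F : E × E → ℝ) (c : ℝ), Continuous F → HasCompactSupport F →
    Superhedgeable η ν F c → ∫ z, F z ∂π ≤ c

variable [BorelSpace E] [FiniteDimensional ℝ E] [IsProbabilityMeasure η]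

lemma exists_linearMap_le_of_superhedgeable [IsFiniteMeasure ν] (hην : ConvexOrder η ν)
    (hν : Integrable (fun y => y) ν) :
    ∃ L : C_c(E × E, ℝ) →ₗ[ℝ] ℝ,
      ∀ (F : C_c(E × E, ℝ)) (c : ℝ), Superhedgeable η ν F c → L F ≤ c := by
  have hbound : ∀ F : C_c(E × E, ℝ), ∃ C : ℝ, ∀ z, |F z| ≤ C := fun F =>
    F.hasCompactSupport.exists_bound_of_continuous F.continuous
  have hne : ∀ F : C_c(E × E, ℝ), {c | Superhedgeable η ν F c}.Nonempty := fun F => by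
    obtain ⟨C, hC⟩ := hbound F
    exact ⟨C, superhedgeable_of_forall_le fun z => (abs_le.1 (hC z)).2⟩
  have hbdd : ∀ F : C_c(E × E, ℝ), BddBelow {c | Superhedgeable η ν F c} := fun F => by
    obtain ⟨C, hC⟩ := hbound F
    exact bddBelow_superhedgeable_of_forall_ge hην hν fun z => (abs_le.1 (hC z)).1
  have hzero : 0 ≤ superhedgingPrice η ν (0 : E × E → ℝ) :=
    Real.sInf_nonneg fun c hc => Superhedgeable.nonneg_of_convexOrder hc hην hν
  obtain ⟨L, -, hL⟩ := exists_extension_of_le_sublinear (⊥ : C_c(E × E, ℝ) →ₗ.[ℝ] ℝ)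
    (fun F => superhedgingPrice η ν F)
    (fun t ht F => superhedgingPrice_smul F ht)
    (fun F G => superhedgingPrice_add_le (hne F) (hbdd F) (hne G) (hbdd G) (hbdd (F + G)))
    (fun F => by
      obtain ⟨F, hF⟩ := F
      obtain rfl := (Submodule.mem_bot ℝ).1 hF
      exact hzero)
  exact ⟨L, fun F c hc => (hL F).trans (csInf_le (hbdd F) hc)⟩

lemma exists_isPricingMeasure [IsFiniteMeasure ν] (hην : ConvexOrder η ν)
    (hν : Integrable (fun y => y) ν) :
    ∃ π : Measure (E × E), IsFiniteMeasureOnCompacts π ∧ IsPricingMeasure η ν π := by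
  obtain ⟨L, hL⟩ := exists_linearMap_le_of_superhedgeable hην hν
  have hpos : ∀ F : C_c(E × E, ℝ), 0 ≤ F → 0 ≤ L F := fun F hF => by
    have hneg : L (-F) ≤ 0 :=
      hL (-F) 0 (superhedgeable_of_forall_le fun z => neg_nonpos.2 (hF z))
    rwa [map_neg, neg_nonpos] at hneg
  refine ⟨RealRMK.rieszMeasure (PositiveLinearMap.mk₀ L hpos), inferInstance,
    fun F c hF hFs hc => ?_⟩
  exact (RealRMK.integral_rieszMeasure (PositiveLinearMap.mk₀ L hpos) ⟨⟨F, hF⟩, hFs⟩).trans_le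
    (hL ⟨⟨F, hF⟩, hFs⟩ c hc)

end PricingMeasure
lemma Superhedgeable.mul_cutoff [BorelSpace E] [IsFiniteMeasure η] [IsFiniteMeasure ν]
    (hη : Integrable (fun x => x) η) (hν : Integrable (fun y => y) ν)
    (hF : Superhedgeable η ν F c) {C : ℝ} (hFC : ∀ z, |F z| ≤ C * (1 + ‖z‖)) {χ : E × E → ℝ}
    (hχ : ∀ z, χ z ∈ Icc 0 1) {r : ℝ} (hχ1 : ∀ z, ‖z‖ ≤ r → χ z = 1) :
    Superhedgeable η ν (F * χ) (c + C * (momentTail η r + momentTail ν r)) := by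
  have hC : 0 ≤ C := by simpa using (abs_nonneg _).trans (hFC 0)
  have htail := (superhedgeable_fst (ν := ν) (integrable_indicator_one_add_norm hη r)).add
    (superhedgeable_snd (η := η) (integrable_indicator_one_add_norm hν r))
  refine (hF.add (htail.smul hC)).mono (fun z => ?_) le_rfl
  simp only [Pi.mul_apply, Pi.add_apply, Pi.smul_apply, smul_eq_mul]
  rcases le_or_gt ‖z‖ r with hz | hz
  · rw [hχ1 z hz, mul_one, le_add_iff_nonneg_right]
    exact mul_nonneg hC (add_nonneg (indicator_nonneg (fun x _ => by positivity) _)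
      (indicator_nonneg (fun x _ => by positivity) _))
  · obtain ⟨hχ0, hχle⟩ := hχ z
    calc F z * χ z = F z + -F z * (1 - χ z) := by ring
      _ ≤ F z + |F z| * 1 := by
        have := mul_le_mul (neg_le_abs (F z)) (sub_le_self 1 hχ0) (sub_nonneg.2 hχle)
          (abs_nonneg (F z))
        linarith
      _ ≤ F z + C * (1 + ‖z‖) := by linarith [hFC z]
      _ ≤ _ := by
        linarith [mul_le_mul_of_nonneg_left (one_add_norm_le_indicator_add_indicator hz) hC]

namespace IsPricingMeasure

variable [BorelSpace E] [FiniteDimensional ℝ E] [IsFiniteMeasure η]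
  {π : Measure (E × E)} [IsFiniteMeasureOnCompacts π]

lemma integrable_one_add_norm (hπ : IsPricingMeasure η ν π) (hη : Integrable (fun x => x) η)
    (hν : Integrable (fun y => y) ν) : Integrable (fun z => 1 + ‖z‖) π := by
  have hcont : Continuous fun z : E × E => 1 + ‖z‖ := by fun_prop
  have hhedge := (superhedgeable_fst (ν := ν) (WOT.integrable_one_add_norm hη)).add
    (superhedgeable_snd (η := η) hν.norm)
  set B : ℝ := ∫ x, (1 + ‖x‖) ∂η + ∫ y, ‖y‖ ∂ν
  obtain ⟨χ, hχ01, hχ1⟩ := exists_seq_cutoff (E × E)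
  have hball : ∀ n : ℕ, ∫ z in Metric.closedBall 0 n, ‖1 + ‖z‖‖ ∂π ≤ B := fun n => by
    have hGc : Continuous fun z => (1 + ‖z‖) * χ n z := hcont.mul (χ n).continuous
    have hGs : HasCompactSupport fun z => (1 + ‖z‖) * χ n z := (χ n).hasCompactSupport.mul_left
    have hGhedge : Superhedgeable η ν (fun z => (1 + ‖z‖) * χ n z) B :=
      hhedge.mono (fun z => (mul_le_of_le_one_right (by positivity) (hχ01 n z).2).trans <| by
        simp [Prod.norm_def, add_assoc]) le_rfl
    calc ∫ z in Metric.closedBall 0 n, ‖1 + ‖z‖‖ ∂π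
        = ∫ z in Metric.closedBall 0 n, (1 + ‖z‖) * χ n z ∂π :=
          setIntegral_congr_fun Metric.isClosed_closedBall.measurableSet fun z hz => by
            simp only [hχ1 n z (mem_closedBall_zero_iff.1 hz), mul_one]
            exact Real.norm_of_nonneg (by positivity)
      _ ≤ ∫ z, (1 + ‖z‖) * χ n z ∂π :=
          setIntegral_le_integral (hGc.integrable_of_hasCompactSupport hGs)
            (Eventually.of_forall fun z => mul_nonneg (by positivity) (hχ01 n z).1)
      _ ≤ B := hπ _ B hGc hGs hGhedge
  exact (aecover_closedBall tendsto_natCast_atTop_atTop).integrable_of_integral_norm_bounded B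
    (fun n => hcont.continuousOn.integrableOn_compact (isCompact_closedBall 0 _))
    (Eventually.of_forall hball)

lemma isFiniteMeasure (hπ : IsPricingMeasure η ν π) (hη : Integrable (fun x => x) η)
    (hν : Integrable (fun y => y) ν) : IsFiniteMeasure π := by
  have hone : Integrable (fun _ : E × E => (1 : ℝ)) π :=
    (hπ.integrable_one_add_norm hη hν).mono' aestronglyMeasurable_const
      (Eventually.of_forall fun z => by simp)
  simpa [integrable_const_iff] using hone

variable [IsFiniteMeasure ν]

lemma integral_le (hπ : IsPricingMeasure η ν π) (hη : Integrable (fun x => x) η)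
    (hν : Integrable (fun y => y) ν) (hFc : Continuous F) {C : ℝ}
    (hFC : ∀ z, |F z| ≤ C * (1 + ‖z‖)) (hF : Superhedgeable η ν F c) : ∫ z, F z ∂π ≤ c := by
  obtain ⟨χ, hχ01, hχ1⟩ := exists_seq_cutoff (E × E)
  have hcutoff : ∀ n, ∫ z, F z * χ n z ∂π ≤ c + C * (momentTail η n + momentTail ν n) := fun n =>
    hπ _ _ (hFc.mul (χ n).continuous) (χ n).hasCompactSupport.mul_left
      (hF.mul_cutoff hη hν hFC (hχ01 n) (hχ1 n))
  have hlim : Tendsto (fun n => ∫ z, F z * χ n z ∂π) atTop (𝓝 (∫ z, F z ∂π)) := by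
    refine tendsto_integral_of_dominated_convergence (fun z => C * (1 + ‖z‖))
      (fun n => (hFc.mul (χ n).continuous).aestronglyMeasurable)
      ((hπ.integrable_one_add_norm hη hν).const_mul C)
      (fun n => Eventually.of_forall fun z => ?_) (Eventually.of_forall fun z => ?_)
    · rw [norm_mul, Real.norm_eq_abs, Real.norm_of_nonneg (hχ01 n z).1]
      exact (mul_le_of_le_one_right (abs_nonneg _) (hχ01 n z).2).trans (hFC z)
    · refine tendsto_const_nhds.congr' ?_
      filter_upwards [tendsto_natCast_atTop_atTop.eventually_ge_atTop ‖z‖] with n hn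
      rw [hχ1 n z hn, mul_one]
  have htail := (((tendsto_momentTail hη).add (tendsto_momentTail hν)).const_mul C).const_add c
  simpa using le_of_tendsto_of_tendsto' hlim htail hcutoff

lemma integral_eq (hπ : IsPricingMeasure η ν π) (hη : Integrable (fun x => x) η)
    (hν : Integrable (fun y => y) ν) (hFc : Continuous F) {C : ℝ}
    (hFC : ∀ z, |F z| ≤ C * (1 + ‖z‖)) (hF : Superhedgeable η ν F c)
    (hF' : Superhedgeable η ν (-F) (-c)) : ∫ z, F z ∂π = c := by
  refine le_antisymm (hπ.integral_le hη hν hFc hFC hF) (neg_le_neg_iff.1 ?_)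
  rw [← integral_neg]
  exact hπ.integral_le hη hν hFc.neg (fun z => by simpa using hFC z) hF'

lemma fst_eq (hπ : IsPricingMeasure η ν π) (hη : Integrable (fun x => x) η)
    (hν : Integrable (fun y => y) ν) : π.fst = η := by
  have := hπ.isFiniteMeasure hη hν
  refine ext_of_forall_integral_eq_of_IsFiniteMeasure fun f => ?_
  rw [Measure.fst, integral_map (by fun_prop) f.continuous.aestronglyMeasurable]
  refine hπ.integral_eq hη hν (C := ‖f‖) (by fun_prop) (fun z => ?_)
    (superhedgeable_fst (f.integrable η)) ?_
  · exact (f.norm_coe_le_norm z.1).trans (le_mul_of_one_le_right (norm_nonneg f) (by simp))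
  · rw [← integral_neg]
    exact superhedgeable_fst (f.integrable η).neg

lemma snd_eq (hπ : IsPricingMeasure η ν π) (hη : Integrable (fun x => x) η)
    (hν : Integrable (fun y => y) ν) : π.snd = ν := by
  have := hπ.isFiniteMeasure hη hν
  refine ext_of_forall_integral_eq_of_IsFiniteMeasure fun f => ?_
  rw [Measure.snd, integral_map (by fun_prop) f.continuous.aestronglyMeasurable]
  refine hπ.integral_eq hη hν (C := ‖f‖) (by fun_prop) (fun z => ?_)
    (superhedgeable_snd (f.integrable ν)) ?_
  · exact (f.norm_coe_le_norm z.2).trans (le_mul_of_one_le_right (norm_nonneg f) (by simp))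
  · rw [← integral_neg]
    exact superhedgeable_snd (f.integrable ν).neg

lemma integral_gain_eq_zero (hπ : IsPricingMeasure η ν π) (hη : Integrable (fun x => x) η)
    (hν : Integrable (fun y => y) ν) {h : E → StrongDual ℝ E} (hc : Continuous h) {C : ℝ}
    (hC : ∀ x, ‖h x‖ ≤ C) : ∫ z, h z.1 (z.2 - z.1) ∂π = 0 := by
  refine hπ.integral_eq hη hν (C := C * 2) (by fun_prop) (fun z => ?_) (superhedgeable_gain h)
    (by
      rw [neg_zero]
      exact (superhedgeable_gain (-h)).mono (fun z => by simp) le_rfl)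
  have hdiff : ‖z.2 - z.1‖ ≤ 2 * (1 + ‖z‖) := by
    linarith [norm_sub_le z.2 z.1, norm_fst_le z, norm_snd_le z]
  calc |h z.1 (z.2 - z.1)| ≤ ‖h z.1‖ * ‖z.2 - z.1‖ := (h z.1).le_opNorm _
    _ ≤ C * (2 * (1 + ‖z‖)) :=
      mul_le_mul (hC z.1) hdiff (norm_nonneg _) ((norm_nonneg _).trans (hC z.1))
    _ = C * 2 * (1 + ‖z‖) := (mul_assoc _ _ _).symm

end IsPricingMeasure

end Superhedging
section Strassen

variable {E : Type*} [NormedAddCommGroup E] [NormedSpace ℝ E] [FiniteDimensional ℝ E]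
  [MeasurableSpace E] [BorelSpace E] {η ν : Measure E}

lemma integrable_snd_sub_fst_compProd [IsFiniteMeasure η] {κ : Kernel E E} [IsMarkovKernel κ]
    (hη : Integrable (fun x => x) η) (hκ : Integrable (fun y => y) (κ ∘ₘ η)) :
    Integrable (fun z : E × E => z.2 - z.1) (η ⊗ₘ κ) := by
  have hsnd : Integrable (fun z : E × E => z.2) (η ⊗ₘ κ) :=
    (Measure.integrable_compProd_snd_iff aestronglyMeasurable_id).2 hκ
  rw [← Measure.fst_compProd η κ] at hη
  exact hsnd.sub (hη.comp_measurable measurable_fst)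

lemma ae_bary_eq_of_integral_smul_eq_zero [IsFiniteMeasure η] {κ : Kernel E E}
    [IsMarkovKernel κ]
    (hη : Integrable (fun x => x) η) (hκ : Integrable (fun y => y) (κ ∘ₘ η))
    (hgain : ∀ (g : E → ℝ) (ℓ : StrongDual ℝ E), Continuous g → HasCompactSupport g →
      ∫ z, (g z.1 • ℓ) (z.2 - z.1) ∂(η ⊗ₘ κ) = 0) :
    ∀ᵐ x ∂η, bary (κ x) = x := by
  have hincrement : Integrable (fun x => bary (κ x) - x) η := (integrable_bary hκ).sub hη
  have hzero : ∀ᵐ x ∂η, bary (κ x) - x = 0 := by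
    refine ae_eq_zero_of_integral_contDiff_smul_eq_zero hincrement.locallyIntegrable
      fun g hg hgs => SeparatingDual.eq_zero_of_forall_dual_eq_zero (R := ℝ) fun ℓ => ?_
    obtain ⟨C, hC⟩ := hgs.exists_bound_of_continuous hg.continuous
    have hint : Integrable (fun z : E × E => g z.1 • (z.2 - z.1)) (η ⊗ₘ κ) :=
      (integrable_snd_sub_fst_compProd hη hκ).bdd_smul C
        (hg.continuous.comp continuous_fst).aestronglyMeasurable
        (Eventually.of_forall fun z => hC z.1)
    calc ℓ (∫ x, g x • (bary (κ x) - x) ∂η)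
        = ℓ (∫ x, ∫ y, g x • (y - x) ∂κ x ∂η) := by
          refine congrArg ℓ (integral_congr_ae ?_)
          filter_upwards [Measure.ae_integrable_of_integrable_comp hκ] with x hx
          rw [integral_smul, integral_sub hx (integrable_const x), integral_const, probReal_univ,
            one_smul, bary]
      _ = ∫ z, (g z.1 • ℓ) (z.2 - z.1) ∂(η ⊗ₘ κ) := by
          rw [← Measure.integral_compProd hint, ← ℓ.integral_comp_comm hint]
          simp only [map_smul, smul_apply]
      _ = 0 := hgain g ℓ hg.continuous hgs
  exact hzero.mono fun x hx => sub_eq_zero.1 hx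

lemma ConvexOrder.exists_kernel_bary_ae_eq [IsProbabilityMeasure η] [IsFiniteMeasure ν]
    (hην : ConvexOrder η ν) (hν : Integrable (fun y => y) ν) :
    ∃ κ : Kernel E E, IsMarkovKernel κ ∧ κ ∘ₘ η = ν ∧ ∀ᵐ x ∂η, bary (κ x) = x := by
  have hη := hην.integrable_id hν
  obtain ⟨π, _, hπ⟩ := exists_isPricingMeasure hην hν
  have := hπ.isFiniteMeasure hη hν
  have hdisint : η ⊗ₘ π.condKernel = π := by
    rw [← hπ.fst_eq hη hν]
    exact π.disintegrate π.condKernel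
  have hsnd : π.condKernel ∘ₘ η = ν := by
    rw [← Measure.snd_compProd, hdisint, hπ.snd_eq hη hν]
  refine ⟨π.condKernel, inferInstance, hsnd,
    ae_bary_eq_of_integral_smul_eq_zero hη (hsnd ▸ hν) fun g ℓ hg hgs => ?_⟩
  obtain ⟨C, hC⟩ := hgs.exists_bound_of_continuous hg
  rw [hdisint]
  exact hπ.integral_gain_eq_zero hη hν (h := fun x => g x • ℓ) (C := C * ‖ℓ‖) (by fun_prop)
    fun x => by
      rw [norm_smul]
      exact mul_le_mul_of_nonneg_right (hC x) (norm_nonneg ℓ)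

end Strassen
section Transport

variable {X Y : Type*} [MeasurableSpace X] [MeasurableSpace Y] {μ : Measure X} {ν : Measure Y}

lemma IsDisint.exists_kernel [SFinite μ] {π : Measure (X × Y)} {K : X → Measure Y}
    (hK : IsDisint π μ K) :
    ∃ κ : Kernel X Y, IsMarkovKernel κ ∧ ⇑κ = K ∧ μ ⊗ₘ κ = π := by
  obtain ⟨hmeas, hprob, hπ⟩ := hK
  have hκ : IsMarkovKernel (⟨K, hmeas⟩ : Kernel X Y) := ⟨hprob⟩
  refine ⟨⟨K, hmeas⟩, hκ, rfl, Measure.ext fun s hs => ?_⟩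
  rw [Measure.compProd_apply hs, hπ s hs]
  rfl

lemma isDisint_compProd [SFinite μ] (κ : Kernel X Y) [IsMarkovKernel κ] :
    IsDisint (μ ⊗ₘ κ) μ κ :=
  ⟨κ.measurable, fun _ => inferInstance, fun _ hs => Measure.compProd_apply hs⟩

lemma compProd_mem_couplings_iff [SFinite μ] {κ : Kernel X Y} [IsMarkovKernel κ] :
    μ ⊗ₘ κ ∈ Couplings μ ν ↔ κ ∘ₘ μ = ν := by
  change (μ ⊗ₘ κ).fst = μ ∧ (μ ⊗ₘ κ).snd = ν ↔ _
  rw [Measure.fst_compProd, Measure.snd_compProd, and_iff_right rfl]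

lemma map_prodMk_mem_couplings {T : X → Y} (hT : Measurable T) :
    (μ.map fun x => (x, T x)) ∈ Couplings μ (μ.map T) := by
  constructor
  · rw [Measure.map_map measurable_fst (by fun_prop)]
    exact Measure.map_id
  · rw [Measure.map_map measurable_snd (by fun_prop)]
    rfl

lemma exists_kernel_of_mem_couplings [IsFiniteMeasure μ] [StandardBorelSpace Y] [Nonempty Y]
    {π : Measure (X × Y)} (hπ : π ∈ Couplings μ ν) :
    ∃ κ : Kernel X Y, IsMarkovKernel κ ∧ κ ∘ₘ μ = ν ∧ μ ⊗ₘ κ = π := by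
  have hfst : π.fst = μ := hπ.1
  have : IsFiniteMeasure (π.map Prod.fst) := hπ.1.symm ▸ inferInstance
  have : IsFiniteMeasure π := Measure.isFiniteMeasure_of_map measurable_fst.aemeasurable
  have hdisint : μ ⊗ₘ π.condKernel = π := hfst ▸ π.disintegrate π.condKernel
  refine ⟨π.condKernel, inferInstance, compProd_mem_couplings_iff.1 ?_, hdisint⟩
  rwa [hdisint]

end Transport

section BarycentricTransport

variable {E : Type*} [NormedAddCommGroup E] [NormedSpace ℝ E] [FiniteDimensional ℝ E]
  [MeasurableSpace E] [BorelSpace E] {μ ν η : Measure E} {θ : E → ℝ}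

lemma eInt_bary_sub_le_eInt_sub [IsFiniteMeasure μ] {κ : Kernel E E} [IsMarkovKernel κ]
    (hθ : ConvexOn ℝ univ θ) (hμ : Integrable (fun x => x) μ)
    (hκ : Integrable (fun y => y) (κ ∘ₘ μ)) :
    eInt (fun x => (θ (bary (κ x) - x) : EReal)) μ
      ≤ eInt (fun z => (θ (z.2 - z.1) : EReal)) (μ ⊗ₘ κ) := by
  have hθc := continuous_of_convexOn_univ hθ
  obtain ⟨a, c, hac⟩ := exists_affine_le_of_convexOn_univ hθ hθc
  have hconv : ∀ x, ConvexOn ℝ univ fun y => θ (y - x) := fun x => by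
    simpa only [preimage_univ, Function.comp_def, sub_eq_add_neg] using hθ.translate_left (-x)
  refine eInt_bary_le_eInt_compProd (f := fun z => θ (z.2 - z.1)) (α := fun x => c - a x)
    (by fun_prop) hconv hκ ((integrable_const c).sub (a.integrable_comp hμ)) a fun x y => ?_
  have := hac (y - x)
  rw [map_sub] at this
  linarith

lemma exists_kernel_bary_ae_eq_of_convexOrder_map [IsProbabilityMeasure μ]
    [IsFiniteMeasure ν] {T : E → E} (hT : Measurable T) (hTν : ConvexOrder (μ.map T) ν)
    (hν : Integrable (fun y => y) ν) :
    ∃ κ : Kernel E E, IsMarkovKernel κ ∧ κ ∘ₘ μ = ν ∧ ∀ᵐ x ∂μ, bary (κ x) = T x := by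
  have := Measure.isProbabilityMeasure_map (μ := μ) hT.aemeasurable
  obtain ⟨κ, _, hκν, hbary⟩ := hTν.exists_kernel_bary_ae_eq hν
  refine ⟨κ.comap T hT, inferInstance, ?_, ae_of_ae_map hT.aemeasurable hbary⟩
  rw [← Kernel.comp_deterministic_eq_comap, ← Measure.comp_assoc,
    Measure.deterministic_comp_eq_map, hκν]

lemma exists_isDisint_eInt_bary_le [IsProbabilityMeasure μ] [IsFiniteMeasure ν]
    (hμ : Integrable (fun x => x) μ) (hν : Integrable (fun y => y) ν) (hθ : ConvexOn ℝ univ θ)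
    (hην : ConvexOrder η ν) {π : Measure (E × E)} (hπ : π ∈ Couplings μ η) :
    ∃ π' ∈ Couplings μ ν, ∃ K, IsDisint π' μ K ∧
      eInt (fun x => (θ (bary (K x) - x) : EReal)) μ
        ≤ eInt (fun z => (θ (z.2 - z.1) : EReal)) π := by
  obtain ⟨κ, _, rfl, rfl⟩ := exists_kernel_of_mem_couplings hπ
  have hη := hην.integrable_id hν
  obtain ⟨κ', _, hκ', hbary⟩ := exists_kernel_bary_ae_eq_of_convexOrder_map measurable_bary
    ((convexOrder_map_bary hη).trans hην) hν
  refine ⟨μ ⊗ₘ κ', compProd_mem_couplings_iff.2 hκ', κ', isDisint_compProd κ', ?_⟩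
  calc eInt (fun x => (θ (bary (κ' x) - x) : EReal)) μ
      = eInt (fun x => (θ (bary (κ x) - x) : EReal)) μ :=
        eInt_congr_ae (hbary.mono fun x hx => by simp only [hx])
    _ ≤ _ := eInt_bary_sub_le_eInt_sub hθ hμ hη

lemma IsDisint.exists_coupling_eInt_eq [IsProbabilityMeasure μ]
    (hν : Integrable (fun y => y) ν) (hθ : Measurable θ) {π : Measure (E × E)}
    (hπ : π ∈ Couplings μ ν) {K : E → Measure E} (hK : IsDisint π μ K) :
    ∃ η, IsProbabilityMeasure η ∧ ConvexOrder η ν ∧ ∃ π' ∈ Couplings μ η,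
      eInt (fun x => (θ (bary (K x) - x) : EReal)) μ
        = eInt (fun z => (θ (z.2 - z.1) : EReal)) π' := by
  obtain ⟨κ, _, rfl, rfl⟩ := hK.exists_kernel
  obtain rfl := compProd_mem_couplings_iff.1 hπ
  have hbary : Measurable fun x => bary (κ x) := measurable_bary
  refine ⟨_, Measure.isProbabilityMeasure_map hbary.aemeasurable, convexOrder_map_bary hν,
    _, map_prodMk_mem_couplings hbary, ?_⟩
  have hcost : Measurable fun z : E × E => (θ (z.2 - z.1) : EReal) := by fun_prop
  exact (eInt_map hcost (measurable_id.prodMk hbary)).symm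

end BarycentricTransport

end WOT

theorem statement14_general {E : Type*} [NormedAddCommGroup E] [NormedSpace ℝ E]
    [FiniteDimensional ℝ E] [MeasurableSpace E] [BorelSpace E]
    (μ ν : Measure E) [IsProbabilityMeasure μ] [IsProbabilityMeasure ν]
    (hμ : FinMom 1 (0 : E) μ) (hν : FinMom 1 (0 : E) ν)
    (θ : E → ℝ) (hθ : ConvexOn ℝ Set.univ θ) :
    sInf {v : EReal | ∃ π ∈ Couplings μ ν, ∃ K : E → Measure E, IsDisint π μ K ∧
        v = eInt (fun x => ((θ (bary (K x) - x) : ℝ) : EReal)) μ}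
      = sInf {v : EReal | ∃ η : Measure E, IsProbabilityMeasure η ∧ FinMom 1 (0 : E) η ∧
          ConvexOrder η ν ∧ ∃ π ∈ Couplings μ η,
          v = eInt (fun z : E × E => ((θ (z.2 - z.1) : ℝ) : EReal)) π} := by
  have hμ := finMom_one_iff_integrable_id.1 hμ
  have hν := finMom_one_iff_integrable_id.1 hν
  refine le_antisymm (le_sInf ?_) (le_sInf ?_)
  · rintro _ ⟨η, -, -, hην, π, hπ, rfl⟩
    obtain ⟨π', hπ', K, hK, hle⟩ := exists_isDisint_eInt_bary_le hμ hν hθ hην hπ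
    exact sInf_le_of_le ⟨π', hπ', K, hK, rfl⟩ hle
  · rintro _ ⟨π, hπ, K, hK, rfl⟩
    obtain ⟨η, hη, hην, π', hπ', hcost⟩ :=
      hK.exists_coupling_eInt_eq hν (continuous_of_convexOn_univ hθ).measurable hπ
    exact sInf_le ⟨η, hη, finMom_one_iff_integrable_id.2 (hην.integrable_id hν), hην,
      π', hπ', hcost⟩

/-- the one-dimensional barycentric weak transport problem with convex cost
reduces to optimal transport onto measures dominated in convex order
(equation `eq:1d-lower bound'`). -/
theorem statement14 (μ ν : Measure ℝ) [IsProbabilityMeasure μ] [IsProbabilityMeasure ν]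
    (hμ : FinMom 1 (0 : ℝ) μ) (hν : FinMom 1 (0 : ℝ) ν)
    (θ : ℝ → ℝ) (hθ : ConvexOn ℝ Set.univ θ) :
    sInf {v : EReal | ∃ π ∈ Couplings μ ν, ∃ K : ℝ → Measure ℝ, IsDisint π μ K ∧
        v = eInt (fun x => ((θ (bary (K x) - x) : ℝ) : EReal)) μ}
      = sInf {v : EReal | ∃ η : Measure ℝ, IsProbabilityMeasure η ∧ FinMom 1 (0 : ℝ) η ∧
          ConvexOrder η ν ∧ ∃ π ∈ Couplings μ η,
          v = eInt (fun z : ℝ × ℝ => ((θ (z.2 - z.1) : ℝ) : EReal)) π} :=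
  statement14_general μ ν hμ hν θ hθ
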